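/- Let k ≥ 4 be an integer and let H be a 2-contractible k-tree with cross-cut number σ = σ(H). Then forb(n,H) = 2^{(σ−1+o(1))·C(n,k−1)}; precisely, for every ε > 0 there exists n₀ such that for all n ≥ n₀ one has 2^{(σ−1−ε)·C(n,k−1)} ≤ forb(n,H) ≤ 2^{(σ−1+ε)·C(n,k−1)}. -/

import Mathlib

open Finset Filter

attribute [local instance] Classical.propDecidable

/-- The vertex set `[n] = {1,…,n}`. -/
def vtx (n : ℕ) : Finset ℕ := Finset.Icc 1 n

/-- `F` is a `k`-graph on `[n]`: a family of `k`-element subsets of `[n]`. -/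
def IsKGraphOn (k n : ℕ) (F : Finset (Finset ℕ)) : Prop :=
  ∀ E ∈ F, E ⊆ vtx n ∧ E.card = k

/-- The vertex set of a hypergraph (union of its edges). -/
def vertexSet {α : Type} [DecidableEq α] (H : Finset (Finset α)) : Finset α := H.sup id

/-- The degree of a vertex: the number of edges containing it. -/
def vdeg {α : Type} [DecidableEq α] (H : Finset (Finset α)) (v : α) : ℕ :=
  (H.filter fun E => v ∈ E).card

/-- Hypertrees, defined recursively: a single edge is a hypertree, and a hypertree grows
by adding a new leaf edge `E` whose intersection with the current vertex set equals its
intersection with some existing (parent) edge `F`. -/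
inductive IsHypertree {α : Type} [DecidableEq α] : Finset (Finset α) → Prop
  | single (E : Finset α) : IsHypertree {E}
  | grow {H : Finset (Finset α)} (E F : Finset α) (hH : IsHypertree H) (hE : E ∉ H)
      (hF : F ∈ H) (hint : E ∩ vertexSet H = E ∩ F) : IsHypertree (insert E H)

/-- A `k`-tree: a `k`-uniform hypertree. -/
def IsKTree {α : Type} [DecidableEq α] (k : ℕ) (H : Finset (Finset α)) : Prop :=
  IsHypertree H ∧ ∀ E ∈ H, E.card = k

/-- A hypergraph is 2-contractible if every edge contains at least two vertices of degree 1. -/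
def TwoContractible {α : Type} [DecidableEq α] (H : Finset (Finset α)) : Prop :=
  ∀ E ∈ H, 2 ≤ (E.filter fun v => vdeg H v = 1).card

/-- `S` is a cross-cut of `H`: every edge meets `S` in exactly one vertex. -/
def IsCrosscut {α : Type} [DecidableEq α] (H : Finset (Finset α)) (S : Finset α) : Prop :=
  ∀ E ∈ H, (E ∩ S).card = 1

/-- `σ` is the cross-cut number of `H`: the minimum size of a cross-cut. -/
def IsCrosscutNumber {α : Type} [DecidableEq α] (H : Finset (Finset α)) (σ : ℕ) : Prop :=
  IsLeast {m | ∃ S : Finset α, IsCrosscut H S ∧ S.card = m} σ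

/-- A hypergraph is `ℓ`-overlapping if any two distinct edges meet in at most `ℓ` vertices. -/
def Overlapping {α : Type} [DecidableEq α] (ℓ : ℕ) (H : Finset (Finset α)) : Prop :=
  ∀ E ∈ H, ∀ F ∈ H, E ≠ F → (E ∩ F).card ≤ ℓ

/-- `K` is (the edge set of) a copy of `H`, i.e. the image of `H` under a map that is
injective on the vertex set of `H`. -/
def IsCopyOf {α : Type} [DecidableEq α] (H : Finset (Finset α)) (K : Finset (Finset ℕ)) : Prop :=
  ∃ φ : α → ℕ, Set.InjOn φ ↑(vertexSet H) ∧ K = H.image fun E => E.image φ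

/-- `F` contains no subgraph isomorphic to `H`. -/
def HFree {α : Type} [DecidableEq α] (H : Finset (Finset α)) (F : Finset (Finset ℕ)) : Prop :=
  ∀ K ⊆ F, ¬ IsCopyOf H K

/-- The collection of copies of `H` in `F` (as distinct subgraphs of `F`). -/
noncomputable def copies {α : Type} [DecidableEq α] (H : Finset (Finset α))
    (F : Finset (Finset ℕ)) : Finset (Finset (Finset ℕ)) :=
  F.powerset.filter (IsCopyOf H)

/-- The number of `H`-free `k`-graphs on the vertex set `[n]`. -/
noncomputable def forb {α : Type} [DecidableEq α] (n k : ℕ) (H : Finset (Finset α)) : ℕ :=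
  (((vtx n).powersetCard k).powerset.filter (HFree H)).card

/-- `H` is a `k`-uniform linear cycle of length `ℓ`. -/
def IsLinearCycle {α : Type} [DecidableEq α] (k ℓ : ℕ) (H : Finset (Finset α)) : Prop :=
  ∃ E : ℕ → Finset α,
    (∀ i < ℓ, (E i).card = k) ∧
    (∀ i < ℓ, ∀ j < ℓ, i ≠ j → E i ≠ E j) ∧
    (∀ i < ℓ, (E i ∩ E ((i + 1) % ℓ)).card = 1) ∧
    (∀ i < ℓ, ∀ j < ℓ, i ≠ j → E i ∩ E ((i + 1) % ℓ) ≠ E j ∩ E ((j + 1) % ℓ)) ∧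
    (∀ i < ℓ, ∀ j < ℓ, i ≠ j → (i + 1) % ℓ ≠ j → (j + 1) % ℓ ≠ i → Disjoint (E i) (E j)) ∧
    H = (Finset.range ℓ).image E

/-- `(X 0, …, X (k-1))` is a `k`-partition of `F`. -/
def IsKPartition (k : ℕ) (F : Finset (Finset ℕ)) (X : Fin k → Finset ℕ) : Prop :=
  (∀ i j, i ≠ j → Disjoint (X i) (X j)) ∧ ∀ E ∈ F, ∀ i, (E ∩ X i).card = 1

/-- The `J`-projection of an edge. -/
def projJ {k : ℕ} (X : Fin k → Finset ℕ) (J : Finset (Fin k)) (E : Finset ℕ) : Finset ℕ :=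
  E ∩ J.sup X

/-- The pattern of a vertex set. -/
def pattern {k : ℕ} (X : Fin k → Finset ℕ) (D : Finset ℕ) : Finset (Fin k) :=
  Finset.univ.filter fun i => (D ∩ X i).Nonempty

/-- `MI(F)`: the patterns of intersections of pairs of distinct edges. -/
noncomputable def MI {k : ℕ} (F : Finset (Finset ℕ)) (X : Fin k → Finset ℕ) :
    Finset (Finset (Fin k)) :=
  ((F ×ˢ F).filter fun p => p.1 ≠ p.2).image fun p => pattern X (p.1 ∩ p.2)

/-- The link of a vertex set `D` in `F`. -/
def link {α : Type} [DecidableEq α] (F : Finset (Finset α)) (D : Finset α) :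
    Finset (Finset α) :=
  (F.filter fun E => D ⊆ E).image fun E => E \ D

/-- The degree of a vertex set `D` in `F`: the size of its link. -/
def setDeg {α : Type} [DecidableEq α] (F : Finset (Finset α)) (D : Finset α) : ℕ :=
  (link F D).card

/-- A nonempty hypergraph is `s`-diverse if every vertex has degree less than `|H|/s`. -/
def SDiverse {α : Type} [DecidableEq α] (s : ℕ) (H : Finset (Finset α)) : Prop :=
  H.Nonempty ∧ ∀ v : α, s * vdeg H v < H.card

/-- `D` is `s`-strong in `F` if its link is `s`-diverse. -/
def SStrong {α : Type} [DecidableEq α] (s : ℕ) (F : Finset (Finset α)) (D : Finset α) : Prop :=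
  SDiverse s (link F D)

/-- `F`, with `k`-partition `X`, is `s`-super-homogeneous: for every `J ∈ MI(F)` and every
edge `E ∈ F`, the projection `E_J` is `s`-strong and `d_F(E_J) ≥ max{s, |F|/(2k·n^|J|)}`. -/
def SuperHomogeneous (n k s : ℕ) (F : Finset (Finset ℕ)) (X : Fin k → Finset ℕ) : Prop :=
  ∀ J ∈ MI F X, ∀ E ∈ F,
    SStrong s F (projJ X J E) ∧
    s ≤ setDeg F (projJ X J E) ∧
    (F.card : ℝ) / (2 * k * (n : ℝ) ^ J.card) ≤ (setDeg F (projJ X J E) : ℝ)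

/-- The rank of a family of subsets of `[k]`: the minimum size of a set `D ⊆ [k]` contained
in no member of the family. -/
noncomputable def rankFam (k : ℕ) (𝒥 : Finset (Finset (Fin k))) : ℕ :=
  sInf {d | ∃ D : Finset (Fin k), D.card = d ∧ ∀ J ∈ 𝒥, ¬ D ⊆ J}

/-- A family of subsets of `[k]` is of type 1 if it contains the full power set of some
`(k-2)`-set `B`. -/
def TypeOne (k : ℕ) (𝒥 : Finset (Finset (Fin k))) : Prop :=
  ∃ B : Finset (Fin k), B.card = k - 2 ∧ ∀ S ⊆ B, S ∈ 𝒥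

/-- The constant `c(k,s) = k!/(k^k·(2s(1+2^k))^(2^k))`. -/
noncomputable def cks (k s : ℕ) : ℝ :=
  (Nat.factorial k : ℝ) / ((k : ℝ) ^ k * (2 * (s : ℝ) * (1 + 2 ^ k)) ^ (2 ^ k))

/-- Degree of a set of vertices in a (uniform) hypergraph `K`: number of edges containing it. -/
def uDeg {α : Type} [DecidableEq α] (K : Finset (Finset α)) (S : Finset α) : ℕ :=
  (K.filter fun e => S ⊆ e).card

/-- A `t`-uniform hypergraph is `d`-graded if `d_K(S) ≤ d^(t-|S|)` for all `S` with
`1 ≤ |S| ≤ t`. -/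
def Graded {α : Type} [DecidableEq α] (t : ℕ) (d : ℝ) (K : Finset (Finset α)) : Prop :=
  ∀ S : Finset α, 1 ≤ S.card → S.card ≤ t → (uDeg K S : ℝ) ≤ d ^ (t - S.card)

/-- `S` is saturated by `K`: `d_K(S) = ⌊d^(t-|S|)⌋`. -/
def Saturated {α : Type} [DecidableEq α] (t : ℕ) (d : ℝ) (K : Finset (Finset α))
    (S : Finset α) : Prop :=
  uDeg K S = ⌊d ^ (t - S.card)⌋₊

/-- `S` is admissible: no nonempty subset of `S` is saturated. -/
def Admissible {α : Type} [DecidableEq α] (t : ℕ) (d : ℝ) (K : Finset (Finset α))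
    (S : Finset α) : Prop :=
  ∀ S' ⊆ S, S'.Nonempty → ¬ Saturated t d K S'

/-- `Z_K(S)`: the vertices `v` such that `S ∪ {v}` is inadmissible and `{v}` is not
saturated. -/
noncomputable def Zset {α : Type} [DecidableEq α] (t : ℕ) (d : ℝ) (K : Finset (Finset α))
    (S : Finset α) : Finset α :=
  (vertexSet K).filter fun v => ¬ Admissible t d K (insert v S) ∧ ¬ Saturated t d K {v}

/-- `ex(G,H)`: the maximum number of edges of an `H`-free subgraph of `G`. -/
noncomputable def exIn {α : Type} [DecidableEq α] (H : Finset (Finset α))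
    (G : Finset (Finset ℕ)) : ℕ :=
  (G.powerset.filter (HFree H)).sup Finset.card

/-- The probability, in the random `k`-graph `G^(k)(n,p)` (each `k`-subset of `[n]` is an
edge independently with probability `p`), of the event `A`. -/
noncomputable def probEvent (k n : ℕ) (p : ℝ) (A : Finset (Finset ℕ) → Prop) : ℝ :=
  ∑ G ∈ ((vtx n).powersetCard k).powerset.filter A,
    p ^ G.card * (1 - p) ^ (((vtx n).powersetCard k).card - G.card)

/-!
A 2-contractible `k`-tree `H` embeds into every nonempty family in which all facets of all edges
have large degree (a *full* family), and even into the family `F` when only the sets left after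
deleting two private vertices from each edge are known to be expandable in `F`. Hence an `H`-free
`F`, as well as its family of expandable `(k-2)`-sets, has no full subfamily and can be peeled off
edge by edge, which bounds it by its shadow.

*Upper bound.* Record the pairs `(T, v)` such that the `(k-2)`-set `T` is not expandable in `F`
but `T ∪ {v}` has large degree. There are `O(n^(k-2))` of them, and they determine a set of
potential edges containing all but `O(n^(k-2))` edges of `F`. A potential edge splits into a
`(k-1)`-set `D` and a center paired with every facet of `D`. For each `σ`-set `A`, the sets `D` all
of whose facets are paired with all of `A` form a family without full subfamilies: sending a
minimum cross-cut of `H` onto `A` would produce a copy of `H`. So all but `O(n^(k-2))` of the sets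
`D` have at most `σ - 1` centers.

*Lower bound.* A family whose edges meet a fixed `(σ-1)`-set in exactly one vertex contains no
copy of `H`, since the preimage of that set would be too small a cross-cut.
-/

open scoped FinsetFamily

section FullFamilies

variable {β : Type} [DecidableEq β] {r s : ℕ} {F G : Finset (Finset β)} {T V : Finset β}

/-- `G` is `s`-full: deleting any vertex from any edge leaves a set of degree at least `s`. -/
def IsFull (s : ℕ) (G : Finset (Finset β)) : Prop :=
  ∀ E ∈ G, ∀ x ∈ E, s ≤ uDeg G (E.erase x)

/-- `F` has no nonempty `s`-full subfamily: the consequence of `H`-freeness that drives the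
upper bound. -/
def IsFullFree (s : ℕ) (F : Finset (Finset β)) : Prop :=
  ∀ G ⊆ F, IsFull s G → G = ∅

/-- `T` is `s`-expandable in `F`: it extends to an edge of `F` whose new vertices avoid any
prescribed set of fewer than `s` vertices. -/
def IsExpandable (s : ℕ) (F : Finset (Finset β)) (T : Finset β) : Prop :=
  ∀ W : Finset β, #W < s → ∃ E ∈ F, T ⊆ E ∧ Disjoint (E \ T) W

lemma IsFullFree.mono (hF : IsFullFree s F) (hGF : G ⊆ F) : IsFullFree s G :=
  fun _ hG => hF _ (hG.trans hGF)

lemma isExpandable_of_mem (hT : T ∈ F) : IsExpandable s F T :=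
  fun W _ => ⟨T, hT, Subset.rfl, by simp⟩

lemma not_isExpandable_iff :
    ¬IsExpandable s F T ↔ ∃ W : Finset β, #W < s ∧ ∀ E ∈ F, T ⊆ E → ¬Disjoint (E \ T) W := by
  simp only [IsExpandable, not_forall, not_exists, not_and, exists_prop]

lemma isExpandable_of_le_uDeg (hF : (F : Set (Finset β)).Sized (#T + 1)) (hT : s ≤ uDeg F T) :
    IsExpandable s F T := by
  intro W hW
  by_contra! hmeet
  have hcover : {E ∈ F | T ⊆ E} ⊆ W.image (insert · T) := by
    intro E hE
    obtain ⟨hEF, hTE⟩ := mem_filter.1 hE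
    obtain ⟨w, hw, hwW⟩ := not_disjoint_iff.1 (hmeet E hEF hTE)
    have hwT : insert w T ⊆ E := insert_subset (mem_sdiff.1 hw).1 hTE
    refine mem_image.2 ⟨w, hwW, eq_of_subset_of_card_le hwT ?_⟩
    rw [hF hEF, card_insert_of_notMem (mem_sdiff.1 hw).2]
  have := (card_le_card hcover).trans card_image_le
  have : #{E ∈ F | T ⊆ E} = uDeg F T := rfl
  lia

lemma IsFull.isExpandable (hG : IsFull s G) (hr : (G : Set (Finset β)).Sized r) {E J : Finset β}
    (hE : E ∈ G) (hJ : J ⊆ E) : IsExpandable s G J := by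
  intro W hW
  obtain ⟨D, hD, hmin⟩ := exists_min_image {D ∈ G | J ⊆ D} (fun D => #((D \ J) ∩ W))
    ⟨E, mem_filter.2 ⟨hE, hJ⟩⟩
  obtain ⟨hDG, hJD⟩ := mem_filter.1 hD
  refine ⟨D, hDG, hJD, ?_⟩
  by_contra hmeet
  obtain ⟨x, hx, hxW⟩ := not_disjoint_iff.1 hmeet
  obtain ⟨hxD, hxJ⟩ := mem_sdiff.1 hx
  have hexp : IsExpandable s G (D.erase x) :=
    isExpandable_of_le_uDeg (by rwa [card_erase_add_one hxD, hr hDG]) (hG D hDG x hxD)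
  obtain ⟨D', hD', hsub, hdisj⟩ := hexp W hW
  have hlt : (D' \ J) ∩ W ⊂ (D \ J) ∩ W := by
    have hnew : ∀ y ∈ D', y ∈ W → y ∈ D.erase x := fun y hy hyW => by
      by_contra hyD
      exact disjoint_left.1 hdisj (Finset.mem_sdiff.2 ⟨hy, hyD⟩) hyW
    refine ssubset_iff_of_subset (fun y hy => ?_) |>.2 ⟨x, by simp [hx, hxW], fun hy => ?_⟩
    · simp only [mem_inter, Finset.mem_sdiff] at hy ⊢
      exact ⟨⟨mem_of_mem_erase (hnew y hy.1.1 hy.2), hy.1.2⟩, hy.2⟩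
    · simp only [mem_inter, Finset.mem_sdiff] at hy
      exact notMem_erase x D (hnew x hy.1.1 hy.2)
  exact (card_lt_card hlt).not_ge
    (hmin D' (mem_filter.2 ⟨hD', (subset_erase.2 ⟨hJD, hxJ⟩).trans hsub⟩))

lemma IsFullFree.exists_covBy (hF : IsFullFree s F) :
    ∃ D : Finset β → Finset β, (∀ E ∈ F, D E ⋖ E) ∧ ∀ T, #{E ∈ F | D E = T} ≤ s := by
  induction F using Finset.strongInduction with
  | H F ih =>
  by_cases hne : F = ∅
  · exact ⟨id, by simp [hne]⟩
  -- Peel off all edges covering a facet `T` of degree below `s`, labelling them with `T`.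
  obtain ⟨E, hE, x, hx, hdeg⟩ : ∃ E ∈ F, ∃ x ∈ E, uDeg F (E.erase x) < s := by
    by_contra! hfull
    exact hne (hF F Subset.rfl hfull)
  set T := E.erase x
  obtain ⟨D, hD, hcard⟩ := ih {E' ∈ F | ¬T ⋖ E'}
    (filter_ssubset.2 ⟨E, hE, not_not.2 (erase_covBy hx)⟩) (hF.mono (filter_subset _ _))
  refine ⟨fun E' => if T ⋖ E' then T else D E', fun E' hE' => ?_, fun T' => ?_⟩
  · by_cases hT : T ⋖ E'
    · simpa only [if_pos hT] using hT
    · simpa only [if_neg hT] using hD E' (mem_filter.2 ⟨hE', hT⟩)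
  · obtain rfl | hT' := eq_or_ne T' T
    · refine (card_le_card fun E' hE' => ?_).trans hdeg.le
      simp only [mem_filter] at hE' ⊢
      refine ⟨hE'.1, ?_⟩
      split_ifs at hE' with hT
      · exact hT.le
      · exact hE'.2 ▸ (hD E' (mem_filter.2 ⟨hE'.1, hT⟩)).le
    · refine (card_le_card fun E' hE' => ?_).trans (hcard T')
      simp only [mem_filter] at hE' ⊢
      split_ifs at hE' with hT
      · exact absurd hE'.2.symm hT'
      · exact ⟨⟨hE'.1, hT⟩, hE'.2⟩

lemma IsFullFree.card_le_mul_card_shadow (hF : IsFullFree s F) : #F ≤ s * #(∂ F) := by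
  obtain ⟨D, hD, hcard⟩ := hF.exists_covBy
  refine card_le_mul_card_image_of_maps_to (f := D) (fun E hE => ?_) s fun T _ => hcard T
  obtain ⟨x, hx, hDE⟩ := (hD E hE).exists_finset_erase
  exact hDE ▸ erase_mem_shadow hE hx

lemma erase_mem_powersetCard {E : Finset β} {x : β} (hE : E ∈ V.powersetCard (r + 1))
    (hx : x ∈ E) : E.erase x ∈ V.powersetCard r := by
  obtain ⟨hEV, hcard⟩ := mem_powersetCard.1 hE
  exact mem_powersetCard.2
    ⟨(erase_subset x E).trans hEV, by rw [card_erase_of_mem hx, hcard, Nat.add_sub_cancel]⟩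

lemma card_shadow_le_choose (hF : F ⊆ V.powersetCard (r + 1)) : #(∂ F) ≤ (#V).choose r := by
  rw [← card_powersetCard]
  refine card_le_card fun T hT => ?_
  obtain ⟨E, hE, x, hx, rfl⟩ := mem_shadow_iff.1 hT
  exact erase_mem_powersetCard (hF hE) hx

lemma IsFullFree.card_le_mul_choose (hF : IsFullFree s F) (hFV : F ⊆ V.powersetCard (r + 1)) :
    #F ≤ s * (#V).choose r :=
  hF.card_le_mul_card_shadow.trans (Nat.mul_le_mul_left s (card_shadow_le_choose hFV))

lemma IsFullFree.card_mul_card_le (hF : IsFullFree s F) (hFV : F ⊆ V.powersetCard r) :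
    #F * #V ≤ s * #V ^ r := by
  cases r with
  | zero =>
    have hempty : F = ∅ := by
      refine hF F Subset.rfl fun E hE x hx => ?_
      simp [card_eq_zero.1 (mem_powersetCard.1 (hFV hE)).2] at hx
    simp [hempty]
  | succ r =>
    calc #F * #V ≤ s * #V ^ r * #V := by
          gcongr
          exact (hF.card_le_mul_choose hFV).trans
            (Nat.mul_le_mul_left s (Nat.choose_le_pow _ _))
      _ = s * #V ^ (r + 1) := by ring

end FullFamilies

section Embedding

variable {α β : Type} [DecidableEq α] [DecidableEq β] {k r s : ℕ} {H : Finset (Finset α)}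
  {F G : Finset (Finset β)}

lemma subset_vertexSet {E : Finset α} (hE : E ∈ H) : E ⊆ vertexSet H :=
  le_sup (f := id) hE

lemma mem_vertexSet {v : α} : v ∈ vertexSet H ↔ ∃ E ∈ H, v ∈ E := by
  simp [vertexSet]

lemma vertexSet_insert (E : Finset α) : vertexSet (insert E H) = E ∪ vertexSet H :=
  sup_insert

lemma eq_of_vdeg_eq_one {v : α} (hv : vdeg H v = 1) {E E' : Finset α} (hE : E ∈ H) (hvE : v ∈ E)
    (hE' : E' ∈ H) (hvE' : v ∈ E') : E = E' :=
  card_le_one.1 hv.le E (mem_filter.2 ⟨hE, hvE⟩) E' (mem_filter.2 ⟨hE', hvE'⟩)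

lemma exists_injOn_union {f : α → β} {X Y : Finset α} {Z : Finset β} (hf : Set.InjOn f X)
    (hXY : Disjoint X Y) (hYZ : #Y = #Z) (hZ : Disjoint (X.image f) Z) :
    ∃ g : α → β, Set.EqOn g f X ∧ Set.InjOn g ↑(X ∪ Y) ∧ Y.image g = Z := by
  let e : Y ≃ Z := equivOfCardEq hYZ
  let g : α → β := fun a => if ha : a ∈ Y then e ⟨a, ha⟩ else f a
  have hgY : ∀ a (ha : a ∈ Y), g a = e ⟨a, ha⟩ := fun a ha => dif_pos ha
  have hgX : Set.EqOn g f X := fun a ha => dif_neg (disjoint_left.1 hXY ha)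
  have hgZ : ∀ a ∈ Y, g a ∈ Z := fun a ha => hgY a ha ▸ (e ⟨a, ha⟩).2
  have hgYinj : Set.InjOn g Y := fun a ha b hb hab => by
    rw [hgY a ha, hgY b hb] at hab
    exact congrArg Subtype.val (e.injective (Subtype.ext hab))
  refine ⟨g, hgX, ?_, ?_⟩
  · rw [coe_union, Set.injOn_union (disjoint_coe.2 hXY)]
    refine ⟨hf.congr hgX.symm, hgYinj, fun a ha b hb hab => ?_⟩
    exact disjoint_left.1 hZ (mem_image_of_mem f ha) (hgX ha ▸ hab ▸ hgZ b hb)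
  · refine eq_of_subset_of_card_le (image_subset_iff.2 hgZ) ?_
    rw [card_image_of_injOn hgYinj, hYZ]

lemma IsExpandable.exists_extension {φ : α → β} {V E : Finset α}
    (hF : IsExpandable s F ((E ∩ V).image φ)) (hφ : Set.InjOn φ V)
    (hE : (F : Set (Finset β)).Sized #E) (hV : #V < s) :
    ∃ ψ : α → β, Set.EqOn ψ φ V ∧ Set.InjOn ψ ↑(V ∪ E) ∧ E.image ψ ∈ F := by
  obtain ⟨B, hB, hEB, hdisj⟩ := hF (V.image φ) (card_image_le.trans_lt hV)
  have hcard : #(E \ V) = #(B \ (E ∩ V).image φ) := by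
    rw [card_sdiff_of_subset hEB, hE hB, card_image_of_injOn (hφ.mono (by simp)),
      card_sdiff, inter_comm V E]
  obtain ⟨ψ, hψφ, hψ, himg⟩ := exists_injOn_union hφ disjoint_sdiff hcard hdisj.symm
  refine ⟨ψ, hψφ, by rwa [union_sdiff_self_eq_union] at hψ, ?_⟩
  have hold : (E ∩ V).image ψ = (E ∩ V).image φ :=
    image_congr (hψφ.mono (by simp))
  have : E.image ψ = B := by
    rw [← sdiff_union_inter E V, image_union, himg, hold, sdiff_union_of_subset hEB]
  rwa [this]

lemma IsHypertree.exists_embedding_sdiff [Nonempty β] (hH : IsHypertree H) (R : Finset α)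
    (hHR : ∀ E ∈ H, #(E \ R) = r) (hs : #(vertexSet H) < s) (hG : IsFull s G)
    (hr : (G : Set (Finset β)).Sized r) (hne : G.Nonempty) :
    ∃ φ : α → β, Set.InjOn φ ↑(vertexSet H \ R) ∧ ∀ E ∈ H, (E \ R).image φ ∈ G := by
  induction hH with
  | single E =>
    obtain ⟨B, hB⟩ := hne
    obtain ⟨ψ, -, hψ, hEψ⟩ := IsExpandable.exists_extension (s := s) (F := G) (V := ∅)
      (E := E \ R) (φ := fun _ => Classical.arbitrary β)
      (by simpa using hG.isExpandable hr hB (empty_subset B)) (by simp)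
      (by rwa [hHR E (mem_singleton_self E)]) (by simpa using (Nat.zero_le _).trans_lt hs)
    exact ⟨ψ, by simpa [vertexSet] using hψ, by simpa using hEψ⟩
  | @grow H E P _ hE hP hint ih =>
    rw [vertexSet_insert] at hs
    obtain ⟨φ, hφ, hφG⟩ := ih (fun E' hE' => hHR E' (mem_insert_of_mem hE'))
      ((card_le_card subset_union_right).trans_lt hs)
    have hsub : (E \ R) ∩ (vertexSet H \ R) ⊆ P \ R := by
      intro v hv
      simp only [mem_inter, Finset.mem_sdiff] at hv ⊢
      have hvP : v ∈ E ∩ P := hint ▸ mem_inter.2 ⟨hv.1.1, hv.2.1⟩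
      exact ⟨(mem_inter.1 hvP).2, hv.1.2⟩
    obtain ⟨ψ, hψφ, hψ, hEψ⟩ := (hG.isExpandable hr (hφG P hP)
      (image_subset_image hsub)).exists_extension hφ
      (by rwa [hHR E (mem_insert_self E H)])
      ((card_le_card (sdiff_subset.trans subset_union_right)).trans_lt hs)
    refine ⟨ψ, ?_, fun E' hE' => ?_⟩
    · rwa [vertexSet_insert, union_sdiff_distrib, union_comm]
    · obtain rfl | hE' := mem_insert.1 hE'
      · exact hEψ
      · have hsub' : E' \ R ⊆ vertexSet H \ R :=
          sdiff_subset_sdiff (subset_vertexSet hE') Subset.rfl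
        rw [image_congr (hψφ.mono (coe_subset.2 hsub'))]
        exact hφG E' hE'

lemma exists_embedding_of_isExpandable {R : Finset α} (hR : ∀ v ∈ R, vdeg H v = 1) {φ : α → β}
    (hφ : Set.InjOn φ ↑(vertexSet H \ R)) (hexp : ∀ E ∈ H, IsExpandable s F ((E \ R).image φ))
    (hH : (H : Set (Finset α)).Sized k) (hF : (F : Set (Finset β)).Sized k)
    (hs : #(vertexSet H) < s) :
    ∃ ψ : α → β, Set.InjOn ψ ↑(vertexSet H) ∧ ∀ E ∈ H, E.image ψ ∈ F := by
  suffices ∀ H' ⊆ H, ∃ ψ : α → β, Set.EqOn ψ φ ↑(vertexSet H \ R) ∧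
      Set.InjOn ψ ↑(vertexSet H \ R ∪ vertexSet H') ∧ ∀ E ∈ H', E.image ψ ∈ F by
    obtain ⟨ψ, -, hψ, hψF⟩ := this H Subset.rfl
    exact ⟨ψ, hψ.mono (coe_subset.2 subset_union_right), hψF⟩
  intro H'
  induction H' using Finset.induction_on with
  | empty => exact fun _ => ⟨φ, fun _ _ => rfl, by simpa [vertexSet] using hφ, by simp⟩
  | insert E H' hE ih =>
    intro hsub
    obtain ⟨hEH, hH'⟩ := insert_subset_iff.1 hsub
    obtain ⟨χ, hχφ, hχ, hχF⟩ := ih hH'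
    set V := vertexSet H \ R ∪ vertexSet H'
    have hEV : E ∩ V = E \ R := by
      refine Subset.antisymm (fun v hv => ?_) (fun v hv => ?_)
      · simp only [V, mem_inter, mem_union, Finset.mem_sdiff, mem_vertexSet] at hv ⊢
        obtain ⟨hvE, hv | ⟨E', hE', hvE'⟩⟩ := hv
        · exact ⟨hvE, hv.2⟩
        · exact ⟨hvE, fun hvR => hE (eq_of_vdeg_eq_one (hR v hvR) hEH hvE (hH' hE') hvE' ▸ hE')⟩
      · obtain ⟨hvE, hvR⟩ := Finset.mem_sdiff.1 hv
        exact mem_inter.2 ⟨hvE, mem_union_left _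
          (Finset.mem_sdiff.2 ⟨subset_vertexSet hEH hvE, hvR⟩)⟩
    have hχE : (E ∩ V).image χ = (E \ R).image φ := by
      rw [hEV]
      exact image_congr (hχφ.mono (coe_subset.2
        (sdiff_subset_sdiff (subset_vertexSet hEH) Subset.rfl)))
    have hVH : V ⊆ vertexSet H := union_subset sdiff_subset (sup_mono hH')
    obtain ⟨ψ, hψχ, hψ, hEψ⟩ := (hχE ▸ hexp E hEH).exists_extension hχ (by rwa [hH hEH])
      ((card_le_card hVH).trans_lt hs)
    refine ⟨ψ, fun v hv => (hψχ (mem_union_left _ hv)).trans (hχφ hv), ?_, fun E' hE' => ?_⟩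
    · rwa [vertexSet_insert, union_comm E, ← union_assoc]
    · obtain rfl | hE' := mem_insert.1 hE'
      · exact hEψ
      · have hE'V : E' ⊆ V := (subset_vertexSet hE').trans subset_union_right
        rw [image_congr (hψχ.mono (coe_subset.2 hE'V))]
        exact hχF E' hE'

lemma exists_subset_card_inter_eq {L : Finset α} {m : ℕ} (hL : ∀ v ∈ L, vdeg H v = 1)
    (hm : ∀ E ∈ H, m ≤ #(E ∩ L)) : ∃ R ⊆ L, ∀ E ∈ H, #(E ∩ R) = m := by
  choose! P hPsub hPcard using fun E hE => exists_subset_card_eq (hm E hE)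
  refine ⟨H.biUnion P, biUnion_subset.2 fun E hE => (hPsub E hE).trans inter_subset_right,
    fun E hE => ?_⟩
  suffices E ∩ H.biUnion P = P E by rw [this, hPcard E hE]
  refine Subset.antisymm (fun v hv => ?_)
    (subset_inter ((hPsub E hE).trans inter_subset_left) (subset_biUnion_of_mem P hE))
  obtain ⟨hvE, hv⟩ := mem_inter.1 hv
  obtain ⟨E', hE', hvP⟩ := mem_biUnion.1 hv
  obtain ⟨hvE', hvL⟩ := mem_inter.1 (hPsub E' hE' hvP)
  rwa [eq_of_vdeg_eq_one (hL v hvL) hE hvE hE' hvE']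

end Embedding

section HFree

variable {α : Type} [DecidableEq α] {k r s : ℕ} {H : Finset (Finset α)} {S : Finset α}
  {F G : Finset (Finset ℕ)}

lemma not_hFree_of_image_mem {φ : α → ℕ} (hφ : Set.InjOn φ ↑(vertexSet H))
    (hF : ∀ E ∈ H, E.image φ ∈ F) : ¬HFree H F :=
  fun hfree => hfree _ (image_subset_iff.2 hF) ⟨φ, hφ, rfl⟩

lemma HFree.isFullFree_of_isExpandable (hfree : HFree H F) (hH : IsKTree k H)
    (hs : #(vertexSet H) < s) (hF : (F : Set (Finset ℕ)).Sized k) {R : Finset α}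
    (hR : ∀ v ∈ R, vdeg H v = 1) (hHR : ∀ E ∈ H, #(E \ R) = r)
    (hr : (G : Set (Finset ℕ)).Sized r) (hG : ∀ T ∈ G, IsExpandable s F T) : IsFullFree s G := by
  intro G' hG' hfull
  by_contra hne
  obtain ⟨φ, hφ, hφG⟩ := hH.1.exists_embedding_sdiff R hHR hs hfull
    (hr.mono (coe_subset.2 hG')) (nonempty_iff_ne_empty.2 hne)
  obtain ⟨ψ, hψ, hψF⟩ := exists_embedding_of_isExpandable hR hφ
    (fun E hE => hG _ (hG' (hφG E hE))) hH.2 hF hs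
  exact not_hFree_of_image_mem hψ hψF hfree

lemma HFree.isFullFree (hfree : HFree H F) (hH : IsKTree k H) (hs : #(vertexSet H) < s)
    (hF : (F : Set (Finset ℕ)).Sized k) : IsFullFree s F :=
  hfree.isFullFree_of_isExpandable hH hs hF (R := ∅) (by simp) (by simpa using hH.2) hF
    fun _ => isExpandable_of_mem

lemma HFree.isFullFree_of_isExpandable_of_twoContractible (hfree : HFree H F)
    (hH : IsKTree (r + 2) H) (h2 : TwoContractible H) (hs : #(vertexSet H) < s)
    (hF : (F : Set (Finset ℕ)).Sized (r + 2)) (hr : (G : Set (Finset ℕ)).Sized r)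
    (hG : ∀ T ∈ G, IsExpandable s F T) : IsFullFree s G := by
  obtain ⟨R, hRL, hR⟩ := exists_subset_card_inter_eq (H := H) (m := 2)
    (L := {v ∈ vertexSet H | vdeg H v = 1}) (fun v hv => (mem_filter.1 hv).2) fun E hE => by
      rw [inter_filter, inter_eq_left.2 (subset_vertexSet hE)]
      exact h2 E hE
  refine hfree.isFullFree_of_isExpandable hH hs hF (fun v hv => (mem_filter.1 (hRL hv)).2)
    (fun E hE => ?_) hr hG
  have := card_sdiff_add_card_inter E R
  rw [hR E hE, hH.2 E hE] at this
  lia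

lemma IsCrosscut.card_sdiff_of_isKTree (hS : IsCrosscut H S) (hH : IsKTree (k + 1) H)
    {E : Finset α} (hE : E ∈ H) : #(E \ S) = k := by
  have := card_sdiff_add_card_inter E S
  rw [hS E hE, hH.2 E hE] at this
  lia

lemma TwoContractible.exists_subset_sdiff_crosscut (h2 : TwoContractible H)
    (hS : IsCrosscut H S) :
    ∃ R ⊆ {v ∈ vertexSet H \ S | vdeg H v = 1}, ∀ E ∈ H, #(E ∩ R) = 1 := by
  refine exists_subset_card_inter_eq (fun v hv => (mem_filter.1 hv).2) fun E hE => ?_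
  have hEL : E ∩ {v ∈ vertexSet H \ S | vdeg H v = 1} = {v ∈ E | vdeg H v = 1} \ (E ∩ S) := by
    ext v
    have := @subset_vertexSet _ _ H E hE v
    simp only [mem_inter, mem_filter, Finset.mem_sdiff]
    tauto
  have := le_card_sdiff (E ∩ S) {v ∈ E | vdeg H v = 1}
  rw [hEL]
  have := h2 E hE
  have := hS E hE
  lia

lemma exists_sdiff_eq_insert_erase {E R : Finset α} (hS : #(E ∩ S) = 1) (hR : #(E ∩ R) = 1)
    (hRS : Disjoint R S) : ∃ v ∈ E ∩ S, ∃ x ∈ E \ S, E \ R = insert v ((E \ S).erase x) := by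
  obtain ⟨v, hv⟩ := card_eq_one.1 hS
  obtain ⟨x, hx⟩ := card_eq_one.1 hR
  have hvES : v ∈ E ∩ S := hv ▸ mem_singleton_self v
  have hxER : x ∈ E ∩ R := hx ▸ mem_singleton_self x
  have hxES : x ∈ E \ S := Finset.mem_sdiff.2
    ⟨(mem_inter.1 hxER).1, disjoint_left.1 hRS (mem_inter.1 hxER).2⟩
  refine ⟨v, hvES, x, hxES, ?_⟩
  ext y
  have h₁ : y ∈ E ∩ S ↔ y = v := by rw [hv, mem_singleton]
  have h₂ : y ∈ E ∩ R ↔ y = x := by rw [hx, mem_singleton]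
  have hyRS : y ∈ R → y ∉ S := fun hy => disjoint_left.1 hRS hy
  simp only [mem_inter, mem_insert, mem_erase, Finset.mem_sdiff] at h₁ h₂ ⊢
  tauto

lemma HFree.isFullFree_of_crosscut (hfree : HFree H F) (hH : IsKTree (r + 2) H)
    (h2 : TwoContractible H) (hS : IsCrosscut H S) (hs : #(vertexSet H) < s)
    (hF : (F : Set (Finset ℕ)).Sized (r + 2)) {A : Finset ℕ} (hA : #S = #A)
    (hr : (G : Set (Finset ℕ)).Sized (r + 1)) (hGA : ∀ D ∈ G, Disjoint D A)
    (hG : ∀ D ∈ G, ∀ v ∈ A, ∀ u ∈ D, IsExpandable s F (insert v (D.erase u))) :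
    IsFullFree s G := by
  intro G' hG' hfull
  by_contra hne
  obtain ⟨φ, hφ, hφG⟩ := hH.1.exists_embedding_sdiff S
    (fun E hE => hS.card_sdiff_of_isKTree hH hE) hs hfull
    (hr.mono (coe_subset.2 hG')) (nonempty_iff_ne_empty.2 hne)
  have hφA : Disjoint ((vertexSet H \ S).image φ) A := by
    refine disjoint_left.2 fun a ha haA => ?_
    obtain ⟨v, hv, rfl⟩ := mem_image.1 ha
    obtain ⟨hvH, hvS⟩ := Finset.mem_sdiff.1 hv
    obtain ⟨E, hE, hvE⟩ := mem_vertexSet.1 hvH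
    exact disjoint_left.1 (hGA _ (hG' (hφG E hE)))
      (mem_image_of_mem φ (Finset.mem_sdiff.2 ⟨hvE, hvS⟩)) haA
  -- Once the cross-cut is sent onto `A`, forgetting one private vertex of each edge leaves only
  -- expandable sets.
  obtain ⟨ψ, hψφ, hψ, hSψ⟩ := exists_injOn_union hφ sdiff_disjoint hA hφA
  rw [sdiff_union_self_eq_union] at hψ
  obtain ⟨R, hRL, hR⟩ := h2.exists_subset_sdiff_crosscut hS
  have hRS : Disjoint R S := disjoint_left.2 fun y hy =>
    (Finset.mem_sdiff.1 (mem_filter.1 (hRL hy)).1).2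
  have hexp : ∀ E ∈ H, IsExpandable s F ((E \ R).image ψ) := by
    intro E hE
    obtain ⟨v, hv, x, hx, hsplit⟩ := exists_sdiff_eq_insert_erase (hS E hE) (hR E hE) hRS
    have hES : ↑(E \ S) ⊆ (↑(vertexSet H \ S) : Set α) :=
      coe_subset.2 (sdiff_subset_sdiff (subset_vertexSet hE) Subset.rfl)
    have himg : ((E \ S).erase x).image ψ = ((E \ S).image φ).erase (φ x) := by
      rw [image_congr (hψφ.mono ((coe_subset.2 (erase_subset x _)).trans hES)),
        erase_eq, image_sdiff_of_injOn (hφ.mono hES) (singleton_subset_iff.2 hx),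
        image_singleton, ← erase_eq]
    rw [hsplit, image_insert, himg]
    exact hG _ (hG' (hφG E hE)) _ (hSψ ▸ mem_image_of_mem ψ (mem_inter.1 hv).2) _
      (mem_image_of_mem φ hx)
  obtain ⟨χ, hχ, hχF⟩ := exists_embedding_of_isExpandable
    (fun v hv => (mem_filter.1 (hRL hv)).2)
    (hψ.mono (coe_subset.2 (sdiff_subset.trans subset_union_left))) hexp hH.2 hF hs
  exact not_hFree_of_image_mem hχ hχF hfree

end HFree

section HeavyPairs

variable {β : Type} [DecidableEq β] {r s c : ℕ} {F : Finset (Finset β)} {D T V : Finset β}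
  {B : Finset (Finset β × β)}

/-- The `s`-expandable `r`-subsets of `V`. -/
noncomputable def expandableSets (V : Finset β) (r s : ℕ) (F : Finset (Finset β)) :
    Finset (Finset β) :=
  {T ∈ V.powersetCard r | IsExpandable s F T}

/-- The pairs `(T, v)` where the `r`-set `T` is not expandable in `F` although `T ∪ {v}` has large
degree. They serve as the container (fingerprint) of `F` in the upper bound. -/
noncomputable def heavyPairs (V : Finset β) (r s : ℕ) (F : Finset (Finset β)) :
    Finset (Finset β × β) :=
  {p ∈ V.powersetCard r ×ˢ V |
    p.2 ∉ p.1 ∧ ¬IsExpandable s F p.1 ∧ s ≤ uDeg F (insert p.2 p.1)}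

/-- The vertices paired with `T` in a set `B` of pairs. -/
noncomputable def partners (V : Finset β) (B : Finset (Finset β × β)) (T : Finset β) : Finset β :=
  {v ∈ V | (T, v) ∈ B}

/-- The vertices outside `D` that are paired in `B` with every facet of `D`. -/
noncomputable def centers (V : Finset β) (B : Finset (Finset β × β)) (D : Finset β) : Finset β :=
  {v ∈ V | v ∉ D ∧ ∀ u ∈ D, (D.erase u, v) ∈ B}

/-- The `(r + 2)`-sets that split into a set `D` and one of its centers. For
`B = heavyPairs V r s F` these include all but `O(|V| ^ r)` edges of `F`. -/
noncomputable def potentialEdges (V : Finset β) (r : ℕ) (B : Finset (Finset β × β)) :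
    Finset (Finset β) :=
  {E ∈ V.powersetCard (r + 2) | ∃ v ∈ E, v ∈ centers V B (E.erase v)}

lemma centers_subset_partners_erase {u : β} (hu : u ∈ D) :
    centers V B D ⊆ partners V B (D.erase u) :=
  monotone_filter_right V fun _ _ h => h.2 u hu

lemma card_partners_heavyPairs_le (hF : F ⊆ V.powersetCard (r + 2)) (T : Finset β) :
    #(partners V (heavyPairs V r s F) T) ≤ s := by
  by_cases hT : IsExpandable s F T
  · simp [partners, heavyPairs, hT]
  obtain ⟨W, hW, hmeet⟩ := not_isExpandable_iff.1 hT
  refine (card_le_card fun v hv => ?_).trans hW.le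
  simp only [partners, heavyPairs, mem_filter, mem_product, mem_powersetCard] at hv
  obtain ⟨-, ⟨⟨-, hTr⟩, -⟩, hvT, -, hdeg⟩ := hv
  have hexp : IsExpandable s F (insert v T) := isExpandable_of_le_uDeg
    (by simpa only [card_insert_of_notMem hvT, hTr] using
      (Set.sized_powersetCard V _).mono (coe_subset.2 hF)) hdeg
  obtain ⟨E, hE, hvTE, hdisj⟩ := hexp W hW
  by_contra hvW
  refine hmeet E hE ((subset_insert v T).trans hvTE) (disjoint_left.2 fun y hy hyW => ?_)
  have hyv : y ≠ v := fun h => hvW (h ▸ hyW)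
  exact disjoint_left.1 hdisj (by simp_all) hyW

lemma card_heavyPairs_le (hF : F ⊆ V.powersetCard (r + 2)) :
    #(heavyPairs V r s F) ≤ s * (#V).choose r := by
  rw [← card_powersetCard]
  refine card_le_mul_card_image_of_maps_to (f := Prod.fst)
    (fun p hp => (mem_product.1 (mem_filter.1 hp).1).1) s fun T _ => ?_
  refine (card_le_card_of_injOn Prod.snd (fun p hp => ?_) fun p hp q hq hpq => ?_).trans
    (card_partners_heavyPairs_le (s := s) hF T)
  · obtain ⟨hpB, rfl⟩ := mem_filter.1 hp
    exact mem_filter.2 ⟨(mem_product.1 (mem_filter.1 hpB).1).2, hpB⟩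
  · exact Prod.ext ((mem_filter.1 hp).2.trans (mem_filter.1 hq).2.symm) hpq

lemma sum_card_le_of_isFullFree_expandableSets (hgood : IsFullFree s (expandableSets V r s F))
    {C : Finset β → Finset β} (hCV : ∀ T, IsExpandable s F T → C T = V)
    (hCs : ∀ T, ¬IsExpandable s F T → #(C T) ≤ s) :
    ∑ T ∈ V.powersetCard r, #(C T) ≤ 2 * s * #V ^ r := by
  calc ∑ T ∈ V.powersetCard r, #(C T)
      ≤ ∑ T ∈ V.powersetCard r, ((if IsExpandable s F T then #V else 0) + s) := by
        refine sum_le_sum fun T _ => ?_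
        split_ifs with hT
        · rw [hCV T hT]
          exact Nat.le_add_right _ _
        · simpa using hCs T hT
    _ = #(expandableSets V r s F) * #V + s * (#V).choose r := by
        rw [sum_add_distrib, ← sum_filter, sum_const, sum_const, card_powersetCard, smul_eq_mul,
          smul_eq_mul, mul_comm s, expandableSets]
    _ ≤ s * #V ^ r + s * #V ^ r := by
        exact add_le_add (hgood.card_mul_card_le (filter_subset _ _))
          (Nat.mul_le_mul_left s (Nat.choose_le_pow _ _))
    _ = 2 * s * #V ^ r := by ring

lemma exists_cover (s : ℕ) (F : Finset (Finset β)) (V : Finset β) :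
    ∃ C : Finset β → Finset β, (∀ T, IsExpandable s F T → C T = V) ∧
      ∀ T, ¬IsExpandable s F T →
        #(C T) ≤ s ∧ ∀ E ∈ F, T ⊆ E → ¬Disjoint (E \ T) (C T) := by
  have : ∀ T, ∃ W : Finset β, (IsExpandable s F T → W = V) ∧ (¬IsExpandable s F T →
      #W ≤ s ∧ ∀ E ∈ F, T ⊆ E → ¬Disjoint (E \ T) W) := by
    intro T
    by_cases hT : IsExpandable s F T
    · exact ⟨V, fun _ => rfl, fun h => absurd hT h⟩
    · obtain ⟨W, hW, hmeet⟩ := not_isExpandable_iff.1 hT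
      exact ⟨W, fun h => absurd h hT, fun _ => ⟨hW.le, hmeet⟩⟩
  choose C hC using this
  exact ⟨C, fun T => (hC T).1, fun T => (hC T).2⟩

lemma exists_facet_of_notMem_potentialEdges (hF : F ⊆ V.powersetCard (r + 2)) {E : Finset β}
    (hE : E ∈ F) (hpot : E ∉ potentialEdges V r (heavyPairs V r s F)) {v : β} (hv : v ∈ E) :
    ∃ T ∈ V.powersetCard r, ∃ u ∈ V, insert u T = E.erase v ∧
      (¬IsExpandable s F T → uDeg F (insert v T) < s) := by
  have hEV := (mem_powersetCard.1 (hF hE)).1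
  have hcenter : v ∉ centers V (heavyPairs V r s F) (E.erase v) := fun h =>
    hpot (mem_filter.2 ⟨hF hE, v, hv, h⟩)
  simp only [centers, mem_filter, hEV hv, notMem_erase, not_false_eq_true, true_and, not_forall,
    exists_prop] at hcenter
  obtain ⟨u, hu, hheavy⟩ := hcenter
  have hT : (E.erase v).erase u ∈ V.powersetCard r :=
    erase_mem_powersetCard (erase_mem_powersetCard (hF hE) hv) hu
  refine ⟨_, hT, u, hEV (mem_of_mem_erase hu), insert_erase hu, fun hexp => ?_⟩
  by_contra! hdeg
  exact hheavy (mem_filter.2 ⟨mem_product.2 ⟨hT, hEV hv⟩,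
    fun h => notMem_erase v E (mem_of_mem_erase h), hexp, hdeg⟩)

lemma exists_mem_cover_of_notMem_potentialEdges (hF : F ⊆ V.powersetCard (r + 2))
    {C : Finset β → Finset β} (hCV : ∀ T, IsExpandable s F T → C T = V)
    (hC : ∀ T, ¬IsExpandable s F T → ∀ E ∈ F, T ⊆ E → ¬Disjoint (E \ T) (C T)) {E : Finset β}
    (hE : E ∈ F) (hpot : E ∉ potentialEdges V r (heavyPairs V r s F)) {v : β} (hv : v ∈ E) :
    ∃ T ∈ V.powersetCard r, ∃ w ∈ C T,
      E.erase v = insert w T ∨ insert w T ⊆ E ∧ uDeg F (insert w T) < s := by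
  obtain ⟨T, hT, u, hu, hins, hdeg⟩ := exists_facet_of_notMem_potentialEdges hF hE hpot hv
  have hTE : T ⊆ E := (subset_insert u T).trans (hins ▸ erase_subset v E)
  by_cases hexp : IsExpandable s F T
  · exact ⟨T, hT, u, hCV T hexp ▸ hu, Or.inl hins.symm⟩
  obtain ⟨w, hw, hwC⟩ := not_disjoint_iff.1 (hC T hexp E hE hTE)
  obtain ⟨hwE, hwT⟩ := Finset.mem_sdiff.1 hw
  obtain rfl | hwv := eq_or_ne w v
  · exact ⟨T, hT, w, hwC, Or.inr ⟨insert_subset hwE hTE, hdeg hexp⟩⟩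
  · have hwu : w ∈ insert u T := hins ▸ mem_erase.2 ⟨hwv, hwE⟩
    obtain rfl := (mem_insert.1 hwu).resolve_right hwT
    exact ⟨T, hT, w, hwC, Or.inl hins.symm⟩

lemma card_sdiff_potentialEdges_le (hFV : F ⊆ V.powersetCard (r + 2)) (hF : IsFullFree s F)
    (hgood : IsFullFree s (expandableSets V r s F)) :
    #(F \ potentialEdges V r (heavyPairs V r s F)) ≤ 4 * s ^ 2 * #V ^ r := by
  obtain ⟨D, hD, hDs⟩ := hF.exists_covBy
  obtain ⟨C, hCV, hC⟩ := exists_cover s F V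
  let P := (V.powersetCard r).sigma C
  let labelled : (Σ _ : Finset β, β) → Finset (Finset β) := fun p => {E ∈ F | D E = insert p.2 p.1}
  let light : (Σ _ : Finset β, β) → Finset (Finset β) := fun p =>
    {E ∈ F | insert p.2 p.1 ⊆ E ∧ uDeg F (insert p.2 p.1) < s}
  have hlight : ∀ p, #(light p) ≤ s := fun p => by
    by_cases hp : uDeg F (insert p.2 p.1) < s
    · exact (card_le_card fun E hE => mem_filter.2
        ⟨(mem_filter.1 hE).1, (mem_filter.1 hE).2.1⟩).trans hp.le
    · simp [light, hp]
  have hcover : F \ potentialEdges V r (heavyPairs V r s F) ⊆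
      P.biUnion fun p => labelled p ∪ light p := by
    intro E hE
    obtain ⟨hEF, hpot⟩ := Finset.mem_sdiff.1 hE
    obtain ⟨v, hv, hDE⟩ := (hD E hEF).exists_finset_erase
    obtain ⟨T, hT, w, hw, h⟩ := exists_mem_cover_of_notMem_potentialEdges hFV hCV
      (fun T hT => (hC T hT).2) hEF hpot hv
    refine mem_biUnion.2 ⟨⟨T, w⟩, mem_sigma.2 ⟨hT, hw⟩,
      mem_union.2 (h.imp (fun h => ?_) fun h => ?_)⟩
    · exact mem_filter.2 ⟨hEF, hDE.symm.trans h⟩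
    · exact mem_filter.2 ⟨hEF, h⟩
  calc #(F \ potentialEdges V r (heavyPairs V r s F))
      ≤ #P * (s + s) := (card_le_card hcover).trans (card_biUnion_le_card_mul _ _ _ fun p _ =>
        (card_union_le _ _).trans (add_le_add (hDs _) (hlight p)))
    _ ≤ 2 * s * #V ^ r * (s + s) := by
        rw [card_sigma]
        gcongr
        exact sum_card_le_of_isFullFree_expandableSets hgood hCV fun T hT => (hC T hT).1
    _ = 4 * s ^ 2 * #V ^ r := by ring

lemma shadow_filter_subset_centers_subset (A : Finset β) :
    ∂ {D ∈ V.powersetCard (r + 1) | A ⊆ centers V B D} ⊆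
      {T ∈ V.powersetCard r | A ⊆ partners V B T} := by
  intro T hT
  obtain ⟨D, hD, u, hu, rfl⟩ := mem_shadow_iff.1 hT
  obtain ⟨hDV, hA⟩ := mem_filter.1 hD
  exact mem_filter.2
    ⟨erase_mem_powersetCard hDV hu, hA.trans (centers_subset_partners_erase hu)⟩

lemma card_filter_lt_card_centers_le
    (hB : ∀ T ∈ V.powersetCard r, #(partners V B T) ≤ s)
    (hfull : ∀ A : Finset β, #A = c + 1 →
      IsFullFree s {D ∈ V.powersetCard (r + 1) | A ⊆ centers V B D}) :
    #{D ∈ V.powersetCard (r + 1) | c < #(centers V B D)} ≤ s * ((#V).choose r * 2 ^ s) := by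
  set 𝒜 := V.powersetCard (c + 1)
  calc #{D ∈ V.powersetCard (r + 1) | c < #(centers V B D)}
      ≤ ∑ D ∈ V.powersetCard (r + 1), #{A ∈ 𝒜 | A ⊆ centers V B D} := by
        rw [card_filter]
        refine sum_le_sum fun D _ => ?_
        split_ifs with hD
        · obtain ⟨A, hA, hAc⟩ := exists_subset_card_eq (Nat.succ_le_of_lt hD)
          exact card_pos.2 ⟨A, mem_filter.2
            ⟨mem_powersetCard.2 ⟨hA.trans (filter_subset _ _), hAc⟩, hA⟩⟩
        · exact Nat.zero_le _
    _ = ∑ A ∈ 𝒜, #{D ∈ V.powersetCard (r + 1) | A ⊆ centers V B D} :=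
        sum_card_bipartiteAbove_eq_sum_card_bipartiteBelow _
    _ ≤ ∑ A ∈ 𝒜, s * #{T ∈ V.powersetCard r | A ⊆ partners V B T} :=
        sum_le_sum fun A hA => (hfull A (mem_powersetCard.1 hA).2).card_le_mul_card_shadow.trans
          (Nat.mul_le_mul_left s (card_le_card (shadow_filter_subset_centers_subset A)))
    _ = s * ∑ T ∈ V.powersetCard r, #{A ∈ 𝒜 | A ⊆ partners V B T} := by
        rw [← mul_sum]
        exact congrArg (s * ·) (sum_card_bipartiteAbove_eq_sum_card_bipartiteBelow _).symm
    _ ≤ s * ∑ T ∈ V.powersetCard r, 2 ^ s := by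
        gcongr with T hT
        calc #{A ∈ 𝒜 | A ⊆ partners V B T} ≤ #(partners V B T).powerset :=
              card_le_card fun A hA => mem_powerset.2 (mem_filter.1 hA).2
          _ ≤ 2 ^ s := by
              rw [card_powerset]
              exact Nat.pow_le_pow_right two_pos (hB T hT)
    _ = s * ((#V).choose r * 2 ^ s) := by rw [sum_const, card_powersetCard, smul_eq_mul]

lemma card_potentialEdges_le (hB : ∀ T ∈ V.powersetCard r, #(partners V B T) ≤ s)
    (hfull : ∀ A : Finset β, #A = c + 1 →
      IsFullFree s {D ∈ V.powersetCard (r + 1) | A ⊆ centers V B D}) :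
    #(potentialEdges V r B) ≤ c * (#V).choose (r + 1) + s * ((#V).choose r * 2 ^ s) * s := by
  have hcover : potentialEdges V r B ⊆ (V.powersetCard (r + 1)).biUnion fun D =>
      (centers V B D).image fun v => insert v D := by
    intro E hE
    obtain ⟨hEV, v, hv, hcenter⟩ := mem_filter.1 hE
    exact mem_biUnion.2 ⟨E.erase v, erase_mem_powersetCard hEV hv,
      mem_image.2 ⟨v, hcenter, insert_erase hv⟩⟩
  have hcenters : ∀ D ∈ V.powersetCard (r + 1), #(centers V B D) ≤ s := by
    intro D hD
    obtain ⟨u, hu⟩ : D.Nonempty := card_pos.1 (by simp [(mem_powersetCard.1 hD).2])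
    exact (card_le_card (centers_subset_partners_erase hu)).trans
      (hB _ (erase_mem_powersetCard hD hu))
  calc #(potentialEdges V r B)
      ≤ ∑ D ∈ V.powersetCard (r + 1), #(centers V B D) :=
        (card_le_card hcover).trans (card_biUnion_le.trans (sum_le_sum fun D _ => card_image_le))
    _ ≤ ∑ D ∈ V.powersetCard (r + 1), (c + if c < #(centers V B D) then s else 0) := by
        refine sum_le_sum fun D hD => ?_
        split_ifs with h
        · exact (hcenters D hD).trans (Nat.le_add_left _ _)
        · exact not_lt.1 h
    _ = c * (#V).choose (r + 1) + #{D ∈ V.powersetCard (r + 1) | c < #(centers V B D)} * s := by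
        rw [sum_add_distrib, sum_const, ← sum_filter, sum_const, card_powersetCard, smul_eq_mul,
          smul_eq_mul, mul_comm c]
    _ ≤ c * (#V).choose (r + 1) + s * ((#V).choose r * 2 ^ s) * s := by
        gcongr
        exact card_filter_lt_card_centers_le hB hfull

end HeavyPairs

section Counting

lemma card_filter_card_le_le {ι : Type} (U : Finset ι) (m : ℕ) :
    #{L ∈ U.powerset | #L ≤ m} ≤ (#U + 1) ^ m := by
  have hcover : {L ∈ U.powerset | #L ≤ m} ⊆ (range (m + 1)).biUnion fun i => U.powersetCard i := by
    intro L hL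
    obtain ⟨hLU, hLm⟩ := mem_filter.1 hL
    exact mem_biUnion.2 ⟨#L, mem_range.2 (Nat.lt_succ_of_le hLm),
      mem_powersetCard.2 ⟨mem_powerset.1 hLU, rfl⟩⟩
  calc #{L ∈ U.powerset | #L ≤ m}
      ≤ ∑ i ∈ range (m + 1), #(U.powersetCard i) := (card_le_card hcover).trans card_biUnion_le
    _ ≤ ∑ i ∈ range (m + 1), #U ^ i * 1 ^ (m - i) * m.choose i := by
        refine sum_le_sum fun i hi => ?_
        rw [card_powersetCard, one_pow, mul_one]
        exact (Nat.choose_le_pow _ _).trans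
          (Nat.le_mul_of_pos_right _ (Nat.choose_pos (Nat.lt_succ_iff.1 (mem_range.1 hi))))
    _ = (#U + 1) ^ m := (add_pow _ _ _).symm

lemma card_le_of_containers {ι κ : Type} [DecidableEq ι] {𝒢 : Finset (Finset ι)} {U : Finset ι}
    {B : Finset κ} {P : κ → Finset ι} {m p : ℕ} (h𝒢 : 𝒢 ⊆ U.powerset)
    (hP : ∀ F ∈ 𝒢, ∃ b ∈ B, #(F \ P b) ≤ m ∧ #(P b) ≤ p) :
    #𝒢 ≤ #B * ((#U + 1) ^ m * 2 ^ p) := by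
  let families : κ → Finset (Finset ι) := fun b =>
    ({L ∈ U.powerset | #L ≤ m} ×ˢ (P b).powerset).image fun q => q.1 ∪ q.2
  have hcover : 𝒢 ⊆ {b ∈ B | #(P b) ≤ p}.biUnion families := by
    intro F hF
    obtain ⟨b, hb, hFm, hbp⟩ := hP F hF
    have hFU : F \ P b ⊆ U := sdiff_subset.trans (mem_powerset.1 (h𝒢 hF))
    refine mem_biUnion.2 ⟨b, mem_filter.2 ⟨hb, hbp⟩, mem_image.2 ⟨(F \ P b, F ∩ P b), ?_,
      sdiff_union_inter F (P b)⟩⟩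
    exact mem_product.2 ⟨mem_filter.2 ⟨mem_powerset.2 hFU, hFm⟩,
      mem_powerset.2 inter_subset_right⟩
  have hcard : ∀ b ∈ {b ∈ B | #(P b) ≤ p}, #(families b) ≤ (#U + 1) ^ m * 2 ^ p := by
    intro b hb
    refine card_image_le.trans ?_
    rw [card_product, card_powerset]
    exact Nat.mul_le_mul (card_filter_card_le_le U m)
      (Nat.pow_le_pow_right two_pos (mem_filter.1 hb).2)
  exact (card_le_card hcover).trans ((card_biUnion_le_card_mul _ _ _ hcard).trans
    (Nat.mul_le_mul_right _ (card_filter_le _ _)))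

lemma choose_add_le (m c r : ℕ) :
    (m + c).choose (r + 1) ≤ m.choose (r + 1) + c * (m + c) ^ r := by
  induction c with
  | zero => simp
  | succ c ih =>
    have hmono : (m + c) ^ r ≤ (m + (c + 1)) ^ r := Nat.pow_le_pow_left (by lia) r
    calc (m + (c + 1)).choose (r + 1)
        = (m + c).choose r + (m + c).choose (r + 1) := Nat.choose_succ_succ _ _
      _ ≤ (m + c) ^ r + (m.choose (r + 1) + c * (m + c) ^ r) :=
          add_le_add (Nat.choose_le_pow _ _) ih
      _ ≤ (m + (c + 1)) ^ r + (m.choose (r + 1) + c * (m + (c + 1)) ^ r) := by gcongr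
      _ = m.choose (r + 1) + (c + 1) * (m + (c + 1)) ^ r := by ring

lemma card_mul_choose_le_card_filter_inter {β : Type} [DecidableEq β] {C V : Finset β}
    (hCV : Disjoint C V) (r : ℕ) :
    #C * (#V).choose r ≤ #{E ∈ (C ∪ V).powersetCard (r + 1) | #(E ∩ C) = 1} := by
  have hinter : ∀ v ∈ C, ∀ D ∈ V.powersetCard r, insert v D ∩ C = {v} ∧ insert v D \ C = D := by
    intro v hv D hD
    have hDC : Disjoint D C := hCV.symm.mono_left (mem_powersetCard.1 hD).1
    rw [insert_inter_of_mem hv, insert_sdiff_of_mem D hv, disjoint_iff_inter_eq_empty.1 hDC,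
      sdiff_eq_self_of_disjoint hDC]
    exact ⟨rfl, rfl⟩
  rw [← card_powersetCard, ← card_product]
  refine card_le_card_of_injOn (fun p => insert p.1 p.2) (fun p hp => ?_) fun p hp q hq hpq => ?_
  · obtain ⟨hv, hD⟩ := mem_product.1 hp
    obtain ⟨hDV, hDr⟩ := mem_powersetCard.1 hD
    refine mem_filter.2 ⟨mem_powersetCard.2 ⟨?_, ?_⟩, ?_⟩
    · exact insert_subset (mem_union_left V hv) (hDV.trans subset_union_right)
    · rw [card_insert_of_notMem fun h => disjoint_left.1 hCV hv (hDV h), hDr]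
    · rw [(hinter _ hv _ hD).1, card_singleton]
  · obtain ⟨hp₁, hp₂⟩ := hinter _ (mem_product.1 hp).1 _ (mem_product.1 hp).2
    obtain ⟨hq₁, hq₂⟩ := hinter _ (mem_product.1 hq).1 _ (mem_product.1 hq).2
    refine Prod.ext (singleton_injective ?_) ?_
    · rw [← hp₁, ← hq₁]
      exact congrArg (· ∩ C) hpq
    · rw [← hp₂, ← hq₂]
      exact congrArg (· \ C) hpq

lemma eventually_pow_le_two_rpow (K r : ℕ) {ε : ℝ} (hε : 0 < ε) :
    ∀ᶠ n : ℕ in atTop,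
      ((n : ℝ) + 1) ^ (K * n ^ r) ≤ (2 : ℝ) ^ (ε * (n.choose (r + 1) : ℝ)) := by
  have hlog : (fun n : ℕ => Real.log ((n : ℝ) + 1)) =o[atTop] fun n : ℕ => (n : ℝ) := by
    have hsucc : (fun n : ℕ => (n : ℝ) + 1) =O[atTop] fun n : ℕ => (n : ℝ) :=
      (Asymptotics.isBigO_refl _ _).add (Asymptotics.isLittleO_const_left.2
        (Or.inr (tendsto_norm_atTop_atTop.comp tendsto_natCast_atTop_atTop))).isBigO
    exact (Real.isLittleO_log_id_atTop.comp_tendsto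
      (tendsto_atTop_add_const_right _ 1 tendsto_natCast_atTop_atTop)).trans_isBigO hsucc
  have hchoose : (fun n : ℕ => (K : ℝ) * (n : ℝ) ^ r * Real.log ((n : ℝ) + 1)) =o[atTop]
      fun n : ℕ => (n.choose (r + 1) : ℝ) := by
    refine Asymptotics.IsLittleO.trans_isTheta ?_ (isTheta_choose (r + 1)).symm
    simpa only [pow_succ, Nat.cast_mul, Nat.cast_pow] using
      ((Asymptotics.isBigO_refl (fun n : ℕ => (n : ℝ) ^ r) atTop).const_mul_left
        (K : ℝ)).mul_isLittleO hlog
  filter_upwards [hchoose.bound (mul_pos hε (Real.log_pos one_lt_two))] with n hn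
  have hexp : (K * n ^ r : ℝ) * Real.log (n + 1) ≤ ε * Real.log 2 * n.choose (r + 1) :=
    (Real.le_norm_self _).trans (hn.trans_eq (by rw [Real.norm_natCast]))
  rw [← Real.log_le_log_iff (by positivity) (by positivity), Real.log_pow,
    Real.log_rpow two_pos]
  push_cast
  linarith

end Counting

section Forb

variable {α : Type} [DecidableEq α] {c r s n : ℕ} {H : Finset (Finset α)} {S : Finset α}
  {F : Finset (Finset ℕ)}

lemma card_vtx (n : ℕ) : #(vtx n) = n := by
  simp [vtx]

lemma HFree.card_sdiff_potentialEdges_le (hfree : HFree H F) (hH : IsKTree (r + 2) H)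
    (h2 : TwoContractible H) (hs : #(vertexSet H) < s) (hF : F ⊆ (vtx n).powersetCard (r + 2)) :
    #(F \ potentialEdges (vtx n) r (heavyPairs (vtx n) r s F)) ≤ 4 * s ^ 2 * n ^ r := by
  have hFr := (Set.sized_powersetCard (vtx n) (r + 2)).mono (coe_subset.2 hF)
  have hgood : IsFullFree s (expandableSets (vtx n) r s F) :=
    hfree.isFullFree_of_isExpandable_of_twoContractible hH h2 hs hFr
      ((Set.sized_powersetCard (vtx n) r).mono (coe_subset.2 (filter_subset _ _)))
      fun T hT => (mem_filter.1 hT).2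
  simpa only [card_vtx] using
    _root_.card_sdiff_potentialEdges_le hF (hfree.isFullFree hH hs hFr) hgood

lemma HFree.card_potentialEdges_heavyPairs_le (hfree : HFree H F) (hH : IsKTree (r + 2) H)
    (h2 : TwoContractible H) (hS : IsCrosscut H S) (hSc : #S = c + 1) (hs : #(vertexSet H) < s)
    (hF : F ⊆ (vtx n).powersetCard (r + 2)) :
    #(potentialEdges (vtx n) r (heavyPairs (vtx n) r s F)) ≤
      c * n.choose (r + 1) + s * (n.choose r * 2 ^ s) * s := by
  have hFr := (Set.sized_powersetCard (vtx n) (r + 2)).mono (coe_subset.2 hF)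
  have hcenters : ∀ A : Finset ℕ, #A = c + 1 → IsFullFree s
      {D ∈ (vtx n).powersetCard (r + 1) |
        A ⊆ centers (vtx n) (heavyPairs (vtx n) r s F) D} := by
    intro A hA
    refine hfree.isFullFree_of_crosscut hH h2 hS hs hFr (hSc.trans hA.symm)
      ((Set.sized_powersetCard (vtx n) (r + 1)).mono (coe_subset.2 (filter_subset _ _)))
      (fun D hD => disjoint_right.2 fun v hv => ?_) fun D hD v hv u hu => ?_
    · exact (mem_filter.1 ((mem_filter.1 hD).2 hv)).2.1
    · obtain ⟨hDV, hDA⟩ := mem_filter.1 hD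
      have hheavy := (mem_filter.1 (hDA hv)).2.2 u hu
      obtain ⟨-, hvD, -, hdeg⟩ := mem_filter.1 hheavy
      refine isExpandable_of_le_uDeg ?_ hdeg
      rwa [card_insert_of_notMem hvD, (mem_powersetCard.1 (erase_mem_powersetCard hDV hu)).2]
  simpa only [card_vtx] using
    card_potentialEdges_le (fun T _ => card_partners_heavyPairs_le hF T) hcenters

lemma forb_le_of_isCrosscut (n : ℕ) (hH : IsKTree (r + 2) H) (h2 : TwoContractible H)
    (hS : IsCrosscut H S) (hSc : #S = c + 1) (hs : #(vertexSet H) < s) :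
    forb n (r + 2) H ≤ (n.choose r * n + 1) ^ (s * n.choose r) *
      ((n.choose (r + 2) + 1) ^ (4 * s ^ 2 * n ^ r) *
        2 ^ (c * n.choose (r + 1) + s * (n.choose r * 2 ^ s) * s)) := by
  set U := (vtx n).powersetCard r ×ˢ vtx n
  have hU : #U = n.choose r * n := by rw [card_product, card_powersetCard, card_vtx]
  have hcontain : forb n (r + 2) H ≤ #{B ∈ U.powerset | #B ≤ s * n.choose r} *
      ((#((vtx n).powersetCard (r + 2)) + 1) ^ (4 * s ^ 2 * n ^ r) *
        2 ^ (c * n.choose (r + 1) + s * (n.choose r * 2 ^ s) * s)) := by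
    refine card_le_of_containers (P := potentialEdges (vtx n) r) (filter_subset _ _)
      fun F hF => ?_
    obtain ⟨hF, hfree⟩ := mem_filter.1 hF
    rw [mem_powerset] at hF
    refine ⟨heavyPairs (vtx n) r s F, mem_filter.2 ⟨mem_powerset.2 (filter_subset _ _), ?_⟩,
      hfree.card_sdiff_potentialEdges_le hH h2 hs hF,
      hfree.card_potentialEdges_heavyPairs_le hH h2 hS hSc hs hF⟩
    simpa only [card_vtx] using card_heavyPairs_le (s := s) hF
  rw [card_powersetCard, card_vtx] at hcontain
  exact hcontain.trans (Nat.mul_le_mul_right _ (hU ▸ card_filter_card_le_le U _))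

lemma exists_forb_le_mul_pow (hH : IsKTree (r + 2) H) (h2 : TwoContractible H)
    (hS : IsCrosscut H S) (hSc : #S = c + 1) :
    ∃ K, ∀ n ≥ 1, forb n (r + 2) H ≤ 2 ^ (c * n.choose (r + 1)) * (n + 1) ^ (K * n ^ r) := by
  set s := #(vertexSet H) + 1
  refine ⟨(r + 2) * (s + 4 * s ^ 2) + s ^ 2 * 2 ^ s, fun n hn => ?_⟩
  have hsucc : ∀ m, n ^ (m + 1) + 1 ≤ (n + 1) ^ (m + 1) := fun m =>
    Nat.succ_le_of_lt (Nat.pow_lt_pow_left n.lt_succ_self m.succ_ne_zero)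
  have hpairs : n.choose r * n + 1 ≤ (n + 1) ^ (r + 2) :=
    calc n.choose r * n + 1 ≤ n ^ r * n + 1 := by gcongr; exact Nat.choose_le_pow _ _
      _ ≤ (n + 1) ^ (r + 1) := hsucc r
      _ ≤ (n + 1) ^ (r + 2) := Nat.pow_le_pow_right n.succ_pos (Nat.le_succ _)
  have hedges : n.choose (r + 2) + 1 ≤ (n + 1) ^ (r + 2) :=
    (Nat.succ_le_succ (Nat.choose_le_pow _ _)).trans (hsucc (r + 1))
  calc forb n (r + 2) H
      ≤ (n.choose r * n + 1) ^ (s * n.choose r) *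
        ((n.choose (r + 2) + 1) ^ (4 * s ^ 2 * n ^ r) *
          2 ^ (c * n.choose (r + 1) + s * (n.choose r * 2 ^ s) * s)) :=
        forb_le_of_isCrosscut n hH h2 hS hSc (Nat.lt_succ_self _)
    _ ≤ ((n + 1) ^ (r + 2)) ^ (s * n ^ r) * (((n + 1) ^ (r + 2)) ^ (4 * s ^ 2 * n ^ r) *
          (2 ^ (c * n.choose (r + 1)) * (n + 1) ^ (s * (n ^ r * 2 ^ s) * s))) := by
        rw [pow_add 2]
        gcongr
        · exact Nat.one_le_pow _ _ n.succ_pos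
        · exact Nat.choose_le_pow _ _
        · exact n.succ_pos
        · exact Nat.succ_le_succ hn
        · exact Nat.choose_le_pow _ _
    _ = 2 ^ (c * n.choose (r + 1)) *
          (n + 1) ^ (((r + 2) * (s + 4 * s ^ 2) + s ^ 2 * 2 ^ s) * n ^ r) := by
        generalize n + 1 = N
        ring

lemma hFree_of_card_inter_eq_one {C : Finset ℕ} (hF : ∀ E ∈ F, #(E ∩ C) = 1)
    (hC : ∀ S, IsCrosscut H S → #C < #S) : HFree H F := by
  rintro K hKF ⟨φ, hφ, rfl⟩
  set S := {v ∈ vertexSet H | φ v ∈ C}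
  have hS : IsCrosscut H S := by
    intro E hE
    have hEH := subset_vertexSet hE
    have himg : (E ∩ S).image φ = E.image φ ∩ C := by
      ext y
      simp only [S, mem_image, mem_inter, mem_filter]
      constructor
      · rintro ⟨v, ⟨hv, -, hvC⟩, rfl⟩
        exact ⟨⟨v, hv, rfl⟩, hvC⟩
      · rintro ⟨⟨v, hv, rfl⟩, hvC⟩
        exact ⟨v, ⟨hv, hEH hv, hvC⟩, rfl⟩
    rw [← hF _ (hKF (mem_image_of_mem _ hE)), ← himg,
      card_image_of_injOn (hφ.mono (coe_subset.2 (inter_subset_left.trans hEH)))]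
  refine (hC S hS).not_ge (card_le_card_of_injOn φ (fun v hv => (mem_filter.1 hv).2) ?_)
  exact hφ.mono (coe_subset.2 (filter_subset _ _))

lemma two_pow_le_forb_mul_pow (hc : ∀ S, IsCrosscut H S → c < #S) (hcn : c ≤ n) :
    2 ^ (c * n.choose (r + 1)) ≤ forb n (r + 2) H * 2 ^ (c ^ 2 * n ^ r) := by
  set F₀ := {E ∈ (vtx n).powersetCard (r + 2) | #(E ∩ vtx c) = 1}
  have hsub : vtx c ⊆ vtx n := Icc_subset_Icc le_rfl hcn
  have hforb : 2 ^ #F₀ ≤ forb n (r + 2) H := by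
    rw [← card_powerset]
    refine card_le_card fun F hF => ?_
    have hFF₀ := mem_powerset.1 hF
    exact mem_filter.2 ⟨mem_powerset.2 (hFF₀.trans (filter_subset _ _)),
      hFree_of_card_inter_eq_one (fun E hE => (mem_filter.1 (hFF₀ hE)).2)
        (by simpa only [card_vtx] using hc)⟩
  have hF₀ : c * (n - c).choose (r + 1) ≤ #F₀ := by
    simpa only [union_sdiff_of_subset hsub, card_sdiff_of_subset hsub, card_vtx] using
      card_mul_choose_le_card_filter_inter (disjoint_sdiff (s := vtx c) (t := vtx n)) (r + 1)
  have hchoose : n.choose (r + 1) ≤ (n - c).choose (r + 1) + c * n ^ r := by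
    simpa only [Nat.sub_add_cancel hcn] using choose_add_le (n - c) c r
  calc 2 ^ (c * n.choose (r + 1)) ≤ 2 ^ (#F₀ + c ^ 2 * n ^ r) := by
        refine Nat.pow_le_pow_right two_pos ?_
        calc c * n.choose (r + 1) ≤ c * ((n - c).choose (r + 1) + c * n ^ r) := by gcongr
          _ = c * (n - c).choose (r + 1) + c ^ 2 * n ^ r := by ring
          _ ≤ #F₀ + c ^ 2 * n ^ r := by gcongr
    _ ≤ forb n (r + 2) H * 2 ^ (c ^ 2 * n ^ r) := by
        rw [pow_add]
        gcongr

lemma IsHypertree.nonempty (hH : IsHypertree H) : H.Nonempty := by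
  cases hH with
  | single E => exact singleton_nonempty E
  | grow E => exact insert_nonempty E _

lemma IsCrosscutNumber.ne_zero (hσ : IsCrosscutNumber H c) (hH : H.Nonempty) : c ≠ 0 := by
  obtain ⟨⟨S, hS, rfl⟩, -⟩ := hσ
  obtain ⟨E, hE⟩ := hH
  have := (hS E hE).symm.trans_le (card_le_card inter_subset_right)
  lia

lemma IsKTree.two_le {k : ℕ} (hH : IsKTree k H) (h2 : TwoContractible H) : 2 ≤ k := by
  obtain ⟨E, hE⟩ := hH.1.nonempty
  exact (h2 E hE).trans ((card_filter_le _ _).trans_eq (hH.2 E hE))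

lemma eventually_forb_le (hH : IsKTree (r + 2) H) (h2 : TwoContractible H)
    (hS : IsCrosscut H S) (hSc : #S = c + 1) {ε : ℝ} (hε : 0 < ε) :
    ∀ᶠ n : ℕ in atTop,
      (forb n (r + 2) H : ℝ) ≤ (2 : ℝ) ^ (((c : ℝ) + ε) * (n.choose (r + 1) : ℝ)) := by
  obtain ⟨K, hK⟩ := exists_forb_le_mul_pow hH h2 hS hSc
  filter_upwards [eventually_pow_le_two_rpow K r hε, eventually_ge_atTop 1] with n hpow hn
  calc (forb n (r + 2) H : ℝ)
      ≤ (2 : ℝ) ^ (c * n.choose (r + 1)) * ((n : ℝ) + 1) ^ (K * n ^ r) := mod_cast hK n hn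
    _ ≤ (2 : ℝ) ^ (c * n.choose (r + 1)) * (2 : ℝ) ^ (ε * (n.choose (r + 1) : ℝ)) := by gcongr
    _ = (2 : ℝ) ^ (((c : ℝ) + ε) * (n.choose (r + 1) : ℝ)) := by
        rw [add_mul, Real.rpow_add two_pos, ← Real.rpow_natCast 2 (c * n.choose (r + 1)),
          Nat.cast_mul]

lemma eventually_le_forb (hc : ∀ S, IsCrosscut H S → c < #S) {ε : ℝ} (hε : 0 < ε) :
    ∀ᶠ n : ℕ in atTop,
      (2 : ℝ) ^ (((c : ℝ) - ε) * (n.choose (r + 1) : ℝ)) ≤ (forb n (r + 2) H : ℝ) := by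
  filter_upwards [eventually_pow_le_two_rpow (c ^ 2) r hε, eventually_ge_atTop c,
    eventually_ge_atTop 1] with n hpow hcn hn
  rw [sub_mul, Real.rpow_sub two_pos, div_le_iff₀ (Real.rpow_pos_of_pos two_pos _)]
  calc (2 : ℝ) ^ ((c : ℝ) * (n.choose (r + 1) : ℝ)) = (2 : ℝ) ^ (c * n.choose (r + 1)) := by
        rw [← Real.rpow_natCast, Nat.cast_mul]
    _ ≤ forb n (r + 2) H * (2 : ℝ) ^ (c ^ 2 * n ^ r) := mod_cast two_pow_le_forb_mul_pow hc hcn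
    _ ≤ forb n (r + 2) H * ((n : ℝ) + 1) ^ (c ^ 2 * n ^ r) := by
        gcongr
        exact_mod_cast Nat.succ_le_succ hn
    _ ≤ forb n (r + 2) H * (2 : ℝ) ^ (ε * (n.choose (r + 1) : ℝ)) := by gcongr

end Forb

theorem stmt_0_general {α : Type} [DecidableEq α] (k : ℕ)
    (H : Finset (Finset α)) (hH : IsKTree k H) (h2 : TwoContractible H)
    (σ : ℕ) (hσ : IsCrosscutNumber H σ) :
    ∀ ε : ℝ, 0 < ε → ∃ n₀ : ℕ, ∀ n ≥ n₀,
      (2 : ℝ) ^ (((σ : ℝ) - 1 - ε) * (n.choose (k - 1) : ℝ)) ≤ (forb n k H : ℝ) ∧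
      (forb n k H : ℝ) ≤ (2 : ℝ) ^ (((σ : ℝ) - 1 + ε) * (n.choose (k - 1) : ℝ)) := by
  intro ε hε
  obtain ⟨r, rfl⟩ := Nat.exists_eq_add_of_le' (hH.two_le h2)
  obtain ⟨c, rfl⟩ := Nat.exists_eq_succ_of_ne_zero (hσ.ne_zero hH.1.nonempty)
  obtain ⟨⟨S, hS, hSc⟩, hmin⟩ := hσ
  rw [Nat.cast_succ, add_sub_cancel_right]
  exact eventually_atTop.1 ((eventually_le_forb (fun S hS => hmin ⟨S, hS, rfl⟩) hε).and
    (eventually_forb_le hH h2 hS hSc hε))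

/-- For `k ≥ 4` and `H` a 2-contractible `k`-tree with cross-cut number `σ`,
`forb(n,H) = 2^{(σ−1+o(1))·C(n,k−1)}`. -/
theorem stmt_0 {α : Type} [DecidableEq α] (k : ℕ) (hk : 4 ≤ k)
    (H : Finset (Finset α)) (hH : IsKTree k H) (h2 : TwoContractible H)
    (σ : ℕ) (hσ : IsCrosscutNumber H σ) :
    ∀ ε : ℝ, 0 < ε → ∃ n₀ : ℕ, ∀ n ≥ n₀,
      (2 : ℝ) ^ (((σ : ℝ) - 1 - ε) * (n.choose (k - 1) : ℝ)) ≤ (forb n k H : ℝ) ∧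
      (forb n k H : ℝ) ≤ (2 : ℝ) ^ (((σ : ℝ) - 1 + ε) * (n.choose (k - 1) : ℝ)) := by
  exact stmt_0_general k H hH h2 σ hσ
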